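/- Let k ≥ 1, let Ω ⊂ ℝ^k be a bounded open set, let ε > 0, and let α > 2 be real. For a smooth function φ : ℝ × ℝ^k → ℝ with compact support contained in (0,ε) × Ω, define (H_α φ)(r,θ) = −∂_r²φ(r,θ) − r^{−α} Δ_θ φ(r,θ), where Δ_θ = Σ_{i=1}^k ∂²_{θ_i}. Then there exist constants c > 0 and B > 0, depending only on k, Ω, ε and α, such that for every such φ: ∫_{(0,ε)×Ω} (H_α φ)² dr dθ ≥ ∫_{(0,ε)×Ω} (∂_r² φ)² dr dθ + c ∫_{(0,ε)×Ω} r^{−2α} (Δ_θ φ)² dr dθ − B ∫_{(0,ε)×Ω} φ² dr dθ. -/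

import Mathlib

open MeasureTheory

/-- Second radial derivative `∂_r² φ` at `p = (r, θ)`. -/
noncomputable def radialD2 {k : ℕ} (φ : ℝ × (Fin k → ℝ) → ℝ) (p : ℝ × (Fin k → ℝ)) : ℝ :=
  iteratedDeriv 2 (fun s => φ (s, p.2)) p.1

/-- Angular Laplacian `Δ_θ φ = ∑_i ∂²_{θ_i} φ` at `p = (r, θ)`. -/
noncomputable def angularLaplacian {k : ℕ} (φ : ℝ × (Fin k → ℝ) → ℝ)
    (p : ℝ × (Fin k → ℝ)) : ℝ :=
  ∑ i : Fin k, iteratedDeriv 2 (fun u => φ (p.1, Function.update p.2 i u)) (p.2 i)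

/-- The model operator `H_α φ = −∂_r² φ − r^{−α} Δ_θ φ` with an irregular
singularity at `r = 0`. -/
noncomputable def modelOp {k : ℕ} (α : ℝ) (φ : ℝ × (Fin k → ℝ) → ℝ)
    (p : ℝ × (Fin k → ℝ)) : ℝ :=
  -radialD2 φ p - p.1 ^ (-α) * angularLaplacian φ p

/-!
Write `w = r^{-α}`, `T = ∂_r² φ` and `L = Δ_θ φ`, so that
`∫ (H_α φ)² = ∫ T² + 2 ∫ w T L + ∫ w² L²` and only the cross term can be negative. Since `w` does
not depend on `θ`, integration by parts gives
`2 ∫ w T L = 2 ∑ i, ∫ w (∂_r ∂_i φ)² - ∑ i, ∫ w'' (∂_i φ)² ≥ ∫ w'' φ L`.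
Turning `∑ i, ∫ w'' (∂_i φ)²` back into `-∫ w'' φ L` before estimating it makes Hardy's inequality
unnecessary: Young's inequality bounds `-∫ w'' φ L` by `η ∫ w² L² + (4η)⁻¹ ∫ (w'' / w)² φ²`. As
`α > 2`, the quotient `(w'' / w)² = (α (α + 1))² r⁻⁴` is at most `δ w² + B` with `δ` as small as we
like, and the Poincaré inequality `∫ w² φ² ≤ 16 R⁴ ∫ w² L²` absorbs the term with `δ`.
-/

open Set
open scoped ContDiff

namespace BasicEstimate

/-- The directional derivative `∂_v f` as a function on `E`, curried so that it can be iterated. -/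
noncomputable def dirDeriv {E : Type*} [NormedAddCommGroup E] [NormedSpace ℝ E]
    (v : E) (f : E → ℝ) : E → ℝ :=
  fun p => fderiv ℝ f p v

local notation:max "∂[" v "]" => dirDeriv v

section DirDeriv

variable {E : Type*} [NormedAddCommGroup E] [NormedSpace ℝ E] {U : Set E} {f g w : E → ℝ} {p : E}

lemma dirDeriv_mul (v : E) (hf : DifferentiableAt ℝ f p) (hg : DifferentiableAt ℝ g p) :
    ∂[v] (fun q => f q * g q) p = f p * ∂[v] g p + ∂[v] f p * g p := by
  simp only [dirDeriv, fderiv_fun_mul hf hg, add_apply, smul_apply, smul_eq_mul, mul_comm (g p)]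

lemma dirDeriv_sq_eq_zero {v : E} (hf : DifferentiableAt ℝ f p) (hfv : ∂[v] f p = 0) :
    ∂[v] (fun q => f q ^ 2) p = 0 := by
  simp only [pow_two, dirDeriv_mul v hf hf, hfv, mul_zero, zero_mul, add_zero]

lemma contDiff_dirDeriv (hf : ContDiff ℝ ∞ f) (v : E) : ContDiff ℝ ∞ (∂[v] f) :=
  (hf.fderiv_right (by simp)).clm_apply contDiff_const

lemma contDiffOn_dirDeriv (hU : IsOpen U) (hf : ContDiffOn ℝ ∞ f U) (v : E) :
    ContDiffOn ℝ ∞ (∂[v] f) U :=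
  (hf.fderiv_of_isOpen hU (by simp)).clm_apply contDiffOn_const

lemma differentiableAt_of_contDiffOn (hU : IsOpen U) (hf : ContDiffOn ℝ ∞ f U) (hp : p ∈ U) :
    DifferentiableAt ℝ f p :=
  (hf.contDiffAt (hU.mem_nhds hp)).differentiableAt (by simp)

lemma dirDeriv_comm (hf : ContDiffAt ℝ 2 f p) (u v : E) :
    ∂[u] (∂[v] f) p = ∂[v] (∂[u] f) p := by
  have dirDeriv_dirDeriv (u v : E) : ∂[u] (∂[v] f) p = fderiv ℝ (fderiv ℝ f) p u v := by
    have hf' : DifferentiableAt ℝ (fderiv ℝ f) p :=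
      (hf.fderiv_right (m := 1) (by norm_num)).differentiableAt one_ne_zero
    change fderiv ℝ (fun q => fderiv ℝ f q v) p u = _
    simp [fderiv_clm_apply hf' (differentiableAt_const v)]
  rw [dirDeriv_dirDeriv, dirDeriv_dirDeriv]
  exact hf.isSymmSndFDerivAt (by simp) u v

lemma dirDeriv_eq_of_eqOn (hU : IsOpen U) (hfg : EqOn f g U) (v : E) :
    EqOn (∂[v] f) (∂[v] g) U := fun _ hp => by
  simp only [dirDeriv, (hfg.eventuallyEq_of_mem (hU.mem_nhds hp)).fderiv_eq]

lemma dirDeriv_dirDeriv_eq_zero (hU : IsOpen U) (hw : ContDiffOn ℝ ∞ w U) {v : E}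
    (hwv : ∀ p ∈ U, ∂[v] w p = 0) (u : E) : ∀ p ∈ U, ∂[v] (∂[u] w) p = 0 := by
  intro p hp
  rw [dirDeriv_comm ((contDiffOn_infty.1 hw 2).contDiffAt (hU.mem_nhds hp)),
    dirDeriv_eq_of_eqOn hU (g := fun _ => 0) hwv u hp]
  simp [dirDeriv]

lemma iteratedDeriv_two_comp_eq_dirDeriv {γ : ℝ → E} {v : E} (hγ : ∀ t, HasDerivAt γ v t)
    (hf : ContDiff ℝ ∞ f) (t : ℝ) :
    iteratedDeriv 2 (fun s => f (γ s)) t = ∂[v] (∂[v] f) (γ t) := by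
  have deriv_comp {g : E → ℝ} (hg : ContDiff ℝ ∞ g) (s : ℝ) :
      deriv (fun s => g (γ s)) s = ∂[v] g (γ s) :=
    ((hg.differentiable (by simp) (γ s)).hasFDerivAt.comp_hasDerivAt s (hγ s)).deriv
  rw [iteratedDeriv_succ, iteratedDeriv_one, funext (deriv_comp hf),
    deriv_comp (contDiff_dirDeriv hf v)]

end DirDeriv

/-- `f` belongs to `C_c^∞(U)`. The condition is on the topological support, so `f` vanishes near
every point outside `U` and may be multiplied by functions that are smooth only on `U`. -/
structure IsTestFunction {E : Type*} [NormedAddCommGroup E] [NormedSpace ℝ E]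
    (U : Set E) (f : E → ℝ) : Prop where
  contDiff : ContDiff ℝ ∞ f
  hasCompactSupport : HasCompactSupport f
  tsupport_subset : tsupport f ⊆ U

namespace IsTestFunction

variable {E : Type*} [NormedAddCommGroup E] [NormedSpace ℝ E] {U : Set E} {f g w : E → ℝ}

lemma eq_zero (hf : IsTestFunction U f) {p : E} (hp : p ∉ U) : f p = 0 :=
  image_eq_zero_of_notMem_tsupport fun h => hp (hf.tsupport_subset h)

lemma dirDeriv (hf : IsTestFunction U f) (v : E) : IsTestFunction U (∂[v] f) where
  contDiff := contDiff_dirDeriv hf.contDiff v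
  hasCompactSupport := hf.hasCompactSupport.fderiv_apply ℝ v
  tsupport_subset := (tsupport_fderiv_apply_subset ℝ v).trans hf.tsupport_subset

lemma add (hf : IsTestFunction U f) (hg : IsTestFunction U g) :
    IsTestFunction U (fun p => f p + g p) where
  contDiff := hf.contDiff.add hg.contDiff
  hasCompactSupport := hf.hasCompactSupport.add hg.hasCompactSupport
  tsupport_subset := (tsupport_add f g).trans (union_subset hf.tsupport_subset hg.tsupport_subset)

lemma sum {ι : Type*} (s : Finset ι) {f : ι → E → ℝ} (hf : ∀ i ∈ s, IsTestFunction U (f i)) :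
    IsTestFunction U (fun p => ∑ i ∈ s, f i p) := by
  induction s using Finset.cons_induction with
  | empty =>
    have tsupport_zero : tsupport (fun _ : E => (0 : ℝ)) = ∅ := tsupport_eq_empty_iff.2 rfl
    simpa using ⟨contDiff_const, HasCompactSupport.zero, by simp [tsupport_zero]⟩
  | cons a s ha ih =>
    simp only [Finset.sum_cons]
    exact (hf a (by simp)).add (ih fun i hi => hf i (by simp [hi]))

lemma smooth_mul (hU : IsOpen U) (hw : ContDiffOn ℝ ∞ w U) (hf : IsTestFunction U f) :
    IsTestFunction U (fun p => w p * f p) where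
  contDiff := by
    refine contDiff_of_contDiffOn_union_of_isOpen (s := U) (t := (tsupport f)ᶜ)
      (hw.mul hf.contDiff.contDiffOn) ?_ ?_ hU (isClosed_tsupport f).isOpen_compl
    · exact (contDiffOn_const (c := 0)).congr fun p hp => by
        rw [image_eq_zero_of_notMem_tsupport hp, mul_zero]
    · exact eq_univ_of_univ_subset <| (union_compl_self (tsupport f)).ge.trans <|
        union_subset_union_left _ hf.tsupport_subset
  hasCompactSupport := hf.hasCompactSupport.mul_left
  tsupport_subset := tsupport_mul_subset_right.trans hf.tsupport_subset

lemma contDiff_mul (hg : ContDiff ℝ ∞ g) (hf : IsTestFunction U f) :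
    IsTestFunction U (fun p => g p * f p) where
  contDiff := hg.mul hf.contDiff
  hasCompactSupport := hf.hasCompactSupport.mul_left
  tsupport_subset := tsupport_mul_subset_right.trans hf.tsupport_subset

lemma const_mul (c : ℝ) (hf : IsTestFunction U f) : IsTestFunction U (fun p => c * f p) :=
  hf.contDiff_mul contDiff_const

lemma mul (hf : IsTestFunction U f) (hg : IsTestFunction U g) :
    IsTestFunction U (fun p => f p * g p) :=
  hg.contDiff_mul hf.contDiff

lemma sq (hf : IsTestFunction U f) : IsTestFunction U (fun p => f p ^ 2) := by
  simpa only [pow_two] using hf.mul hf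

variable [MeasurableSpace E] {μ : Measure E}

lemma integral_mul_sq_nonneg (hf : IsTestFunction U f) (hw : ∀ p ∈ U, 0 ≤ w p) :
    0 ≤ ∫ p, w p * f p ^ 2 ∂μ := by
  refine integral_nonneg fun p => ?_
  by_cases hp : p ∈ U
  · exact mul_nonneg (hw p hp) (sq_nonneg _)
  · simp [hf.eq_zero hp]

variable [BorelSpace E]

lemma integrable [IsFiniteMeasureOnCompacts μ] (hf : IsTestFunction U f) : Integrable f μ :=
  hf.contDiff.continuous.integrable_of_hasCompactSupport hf.hasCompactSupport

lemma integral_mono [IsFiniteMeasureOnCompacts μ] (hf : IsTestFunction U f)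
    (hg : IsTestFunction U g) (hfg : ∀ p ∈ U, f p ≤ g p) : ∫ p, f p ∂μ ≤ ∫ p, g p ∂μ := by
  refine MeasureTheory.integral_mono hf.integrable hg.integrable fun p => ?_
  by_cases hp : p ∈ U
  · exact hfg p hp
  · rw [hf.eq_zero hp, hg.eq_zero hp]

-- The pointwise bound is `|κ f g| ≤ 2 √(a f²) √(b g²) ≤ a f² + b g²`.
lemma neg_integral_mul_mul_le [IsFiniteMeasureOnCompacts μ] (hU : IsOpen U) {κ a b : E → ℝ}
    (hκ : ContDiffOn ℝ ∞ κ U) (ha : ContDiffOn ℝ ∞ a U) (hb : ContDiffOn ℝ ∞ b U)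
    (ha0 : ∀ p ∈ U, 0 ≤ a p) (hb0 : ∀ p ∈ U, 0 ≤ b p) (hf : IsTestFunction U f)
    (hg : IsTestFunction U g) (hκab : ∀ p ∈ tsupport f, κ p ^ 2 ≤ 4 * a p * b p) :
    -∫ p, κ p * (f p * g p) ∂μ ≤ ∫ p, a p * f p ^ 2 ∂μ + ∫ p, b p * g p ^ 2 ∂μ := by
  have haf := hf.sq.smooth_mul hU ha
  have hbg := hg.sq.smooth_mul hU hb
  rw [← integral_add haf.integrable hbg.integrable, ← neg_one_mul, ← integral_const_mul]
  refine (((hf.mul hg).smooth_mul hU hκ).const_mul _).integral_mono (haf.add hbg) fun p hp => ?_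
  have haf0 := mul_nonneg (ha0 p hp) (sq_nonneg (f p))
  have hbg0 := mul_nonneg (hb0 p hp) (sq_nonneg (g p))
  by_cases hpf : p ∈ tsupport f
  · have sq_le : (κ p * (f p * g p)) ^ 2 ≤ (a p * f p ^ 2 + b p * g p ^ 2) ^ 2 :=
      calc (κ p * (f p * g p)) ^ 2 = κ p ^ 2 * (f p ^ 2 * g p ^ 2) := by ring
        _ ≤ 4 * a p * b p * (f p ^ 2 * g p ^ 2) := by gcongr; exact hκab p hpf
        _ = 4 * (a p * f p ^ 2) * (b p * g p ^ 2) := by ring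
        _ ≤ (a p * f p ^ 2 + b p * g p ^ 2) ^ 2 := four_mul_le_sq_add _ _
    linarith [(abs_le_of_sq_le_sq' sq_le (add_nonneg haf0 hbg0)).1]
  · simpa [image_eq_zero_of_notMem_tsupport hpf] using hbg0

lemma integral_sq_neg_sub_mul [IsFiniteMeasureOnCompacts μ] (hU : IsOpen U)
    (hw : ContDiffOn ℝ ∞ w U) (hf : IsTestFunction U f) (hg : IsTestFunction U g) :
    ∫ p, (-f p - w p * g p) ^ 2 ∂μ
      = ∫ p, f p ^ 2 ∂μ + 2 * ∫ p, w p * (f p * g p) ∂μ + ∫ p, w p ^ 2 * g p ^ 2 ∂μ := by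
  have hcross := ((hf.mul hg).smooth_mul hU hw).const_mul 2
  have hwg := hg.sq.smooth_mul hU (hw.pow 2)
  rw [← integral_const_mul, ← integral_add hf.sq.integrable hcross.integrable,
    ← integral_add (hf.sq.add hcross).integrable hwg.integrable]
  congr 1 with p
  ring

end IsTestFunction

section IntegrationByParts

variable {E : Type*} [NormedAddCommGroup E] [NormedSpace ℝ E] [FiniteDimensional ℝ E]
  [MeasurableSpace E] [BorelSpace E] {μ : Measure E} [μ.IsAddHaarMeasure]
  {U : Set E} {f g w : E → ℝ}

lemma integral_mul_mul_dirDeriv (hU : IsOpen U) (hw : ContDiffOn ℝ ∞ w U)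
    (hf : ContDiffOn ℝ ∞ f U) (hg : IsTestFunction U g) (v : E) :
    ∫ p, w p * (f p * ∂[v] g p) ∂μ
      = -∫ p, w p * (∂[v] f p * g p) ∂μ - ∫ p, ∂[v] w p * (f p * g p) ∂μ := by
  have product_rule (p : E) :
      ∂[v] (fun q => w q * f q) p * g p = w p * (∂[v] f p * g p) + ∂[v] w p * (f p * g p) := by
    by_cases hp : p ∈ U
    · rw [dirDeriv_mul v (differentiableAt_of_contDiffOn hU hw hp)
        (differentiableAt_of_contDiffOn hU hf hp)]
      ring
    · simp [hg.eq_zero hp]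
  have by_parts : ∫ p, (w p * f p) * ∂[v] g p ∂μ = -∫ p, ∂[v] (fun q => w q * f q) p * g p ∂μ :=
    integral_mul_fderiv_eq_neg_fderiv_mul_of_integrable
      (hg.smooth_mul hU (contDiffOn_dirDeriv hU (hw.mul hf) v)).integrable
      ((hg.dirDeriv v).smooth_mul hU (hw.mul hf)).integrable
      (hg.smooth_mul hU (hw.mul hf)).integrable
      (fun p hp => differentiableAt_of_contDiffOn hU (hw.mul hf) (hg.tsupport_subset hp))
      (fun p _ => hg.contDiff.differentiable (by simp) p)
  have hw_f'g := (hg.smooth_mul hU (contDiffOn_dirDeriv hU hf v)).smooth_mul hU hw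
  have hw'_fg := (hg.smooth_mul hU hf).smooth_mul hU (contDiffOn_dirDeriv hU hw v)
  simp only [mul_assoc, product_rule] at by_parts
  rw [by_parts, integral_add hw_f'g.integrable hw'_fg.integrable]
  ring

lemma integral_mul_mul_dirDeriv_self (hU : IsOpen U) (hw : ContDiffOn ℝ ∞ w U)
    (hf : IsTestFunction U f) (v : E) :
    ∫ p, w p * (f p * ∂[v] f p) ∂μ = -(1 / 2) * ∫ p, ∂[v] w p * f p ^ 2 ∂μ := by
  have by_parts := integral_mul_mul_dirDeriv (μ := μ) hU hw hf.contDiff.contDiffOn hf v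
  simp only [mul_comm (∂[v] f _), ← pow_two] at by_parts
  linarith

lemma integral_mul_mul_dirDeriv_of_dirDeriv_eq_zero (hU : IsOpen U) (hw : ContDiffOn ℝ ∞ w U)
    {v : E} (hwv : ∀ p ∈ U, ∂[v] w p = 0) (hf : ContDiffOn ℝ ∞ f U) (hg : IsTestFunction U g) :
    ∫ p, w p * (f p * ∂[v] g p) ∂μ = -∫ p, w p * (∂[v] f p * g p) ∂μ := by
  have hw'_fg (p : E) : ∂[v] w p * (f p * g p) = 0 := by
    by_cases hp : p ∈ U
    · rw [hwv p hp, zero_mul]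
    · rw [hg.eq_zero hp, mul_zero, mul_zero]
  simp only [integral_mul_mul_dirDeriv hU hw hf hg v, hw'_fg, integral_zero, sub_zero]

lemma integral_mul_dirDeriv_dirDeriv_mul_dirDeriv_dirDeriv (hU : IsOpen U)
    (hw : ContDiffOn ℝ ∞ w U) {v : E} (hwv : ∀ p ∈ U, ∂[v] w p = 0) (hf : IsTestFunction U f)
    (u : E) :
    ∫ p, w p * (∂[u] (∂[u] f) p * ∂[v] (∂[v] f) p) ∂μ
      = ∫ p, w p * ∂[u] (∂[v] f) p ^ 2 ∂μ
        - 1 / 2 * ∫ p, ∂[u] (∂[u] w) p * ∂[v] f p ^ 2 ∂μ := by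
  have dirDeriv_comm_of_test {h : E → ℝ} (hh : IsTestFunction U h) :
      ∂[v] (∂[u] h) = ∂[u] (∂[v] h) :=
    funext fun p => dirDeriv_comm ((contDiff_infty.1 hh.contDiff 2).contDiffAt) v u
  have hfv := hf.dirDeriv v
  calc ∫ p, w p * (∂[u] (∂[u] f) p * ∂[v] (∂[v] f) p) ∂μ
      = -∫ p, w p * (∂[v] f p * ∂[u] (∂[u] (∂[v] f)) p) ∂μ := by
        rw [integral_mul_mul_dirDeriv_of_dirDeriv_eq_zero hU hw hwv
          ((hf.dirDeriv u).dirDeriv u).contDiff.contDiffOn hfv,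
          dirDeriv_comm_of_test (hf.dirDeriv u), dirDeriv_comm_of_test hf]
        simp only [mul_comm (∂[v] f _)]
    _ = ∫ p, w p * ∂[u] (∂[v] f) p ^ 2 ∂μ
          + ∫ p, ∂[u] w p * (∂[v] f p * ∂[u] (∂[v] f) p) ∂μ := by
        rw [integral_mul_mul_dirDeriv hU hw hfv.contDiff.contDiffOn (hfv.dirDeriv u) u]
        simp only [← pow_two]
        ring
    _ = _ := by
        rw [integral_mul_mul_dirDeriv_self hU (contDiffOn_dirDeriv hU hw u) hfv u]
        ring

-- Since `∂_v (ℓ w) = w`, integrating by parts gives `∫ w f² = -2 ∫ ℓ w f ∂_v f`.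
lemma integral_mul_sq_le_integral_mul_dirDeriv_sq (hU : IsOpen U) (hw : ContDiffOn ℝ ∞ w U)
    (hw0 : ∀ p ∈ U, 0 ≤ w p) {v : E} (hwv : ∀ p ∈ U, ∂[v] w p = 0) (hf : IsTestFunction U f)
    {ℓ : E →L[ℝ] ℝ} (hℓv : ℓ v = 1) {R : ℝ} (hR : ∀ p ∈ tsupport f, |ℓ p| ≤ R) :
    ∫ p, w p * f p ^ 2 ∂μ ≤ 4 * R ^ 2 * ∫ p, w p * ∂[v] f p ^ 2 ∂μ := by
  have hℓw : ContDiffOn ℝ ∞ (fun p => ℓ p * w p) U := ℓ.contDiff.contDiffOn.mul hw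
  have dirDeriv_ℓw (p : E) : ∂[v] (fun q => ℓ q * w q) p * f p ^ 2 = w p * f p ^ 2 := by
    by_cases hp : p ∈ U
    · rw [dirDeriv_mul v ℓ.differentiableAt (differentiableAt_of_contDiffOn hU hw hp), hwv p hp]
      simp [dirDeriv, hℓv]
    · simp [hf.eq_zero hp]
  have by_parts := integral_mul_mul_dirDeriv_self (μ := μ) hU hℓw hf v
  simp only [dirDeriv_ℓw] at by_parts
  have young := hf.neg_integral_mul_mul_le (μ := μ) hU (κ := fun p => 2 * (ℓ p * w p))
    (a := fun p => 1 / 2 * w p) (b := fun p => 2 * R ^ 2 * w p)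
    (contDiffOn_const.mul hℓw) (contDiffOn_const.mul hw) (contDiffOn_const.mul hw)
    (fun p hp => mul_nonneg (by norm_num) (hw0 p hp))
    (fun p hp => mul_nonneg (by positivity) (hw0 p hp)) (hf.dirDeriv v) fun p hp => by
      have ℓ_sq_le : ℓ p ^ 2 ≤ R ^ 2 := sq_le_sq.2 ((hR p hp).trans (le_abs_self R))
      linarith [mul_le_mul_of_nonneg_right ℓ_sq_le (sq_nonneg (w p))]
  simp only [mul_assoc, integral_const_mul] at by_parts young
  linarith

end IntegrationByParts

/-- The sum of squares `∑ i, ∂_{v i}² f` of the derivatives along finitely many vectors; for the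
angular coordinate vectors this is the angular Laplacian. -/
noncomputable def partialLaplacian {E ι : Type*} [NormedAddCommGroup E] [NormedSpace ℝ E]
    [Fintype ι] (v : ι → E) (f : E → ℝ) (p : E) : ℝ :=
  ∑ i, ∂[v i] (∂[v i] f) p

lemma IsTestFunction.partialLaplacian {E ι : Type*} [NormedAddCommGroup E] [NormedSpace ℝ E]
    [Fintype ι] {U : Set E} {f : E → ℝ} (hf : IsTestFunction U f) (v : ι → E) :
    IsTestFunction U (partialLaplacian v f) :=
  .sum _ fun i _ => (hf.dirDeriv (v i)).dirDeriv (v i)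

section PartialLaplacian

variable {E ι : Type*} [NormedAddCommGroup E] [NormedSpace ℝ E] [MeasurableSpace E] [BorelSpace E]
  {μ : Measure E} [Fintype ι] {U : Set E} {f g w : E → ℝ} {v : ι → E}

lemma integral_mul_mul_partialLaplacian [IsFiniteMeasureOnCompacts μ] (hU : IsOpen U)
    (hw : ContDiffOn ℝ ∞ w U) (hg : ContDiffOn ℝ ∞ g U) (hf : IsTestFunction U f) :
    ∫ p, w p * (g p * partialLaplacian v f p) ∂μ
      = ∑ i, ∫ p, w p * (g p * ∂[v i] (∂[v i] f) p) ∂μ := by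
  rw [← integral_finsetSum _ fun i _ =>
    ((((hf.dirDeriv (v i)).dirDeriv (v i)).smooth_mul hU hg).smooth_mul hU hw).integrable]
  simp only [partialLaplacian, Finset.mul_sum]

variable [FiniteDimensional ℝ E] [μ.IsAddHaarMeasure]

lemma sum_integral_mul_dirDeriv_sq (hU : IsOpen U) (hw : ContDiffOn ℝ ∞ w U)
    (hwv : ∀ i, ∀ p ∈ U, ∂[v i] w p = 0) (hf : IsTestFunction U f) :
    ∑ i, ∫ p, w p * ∂[v i] f p ^ 2 ∂μ = -∫ p, w p * (f p * partialLaplacian v f p) ∂μ := by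
  have green (i : ι) :
      ∫ p, w p * ∂[v i] f p ^ 2 ∂μ = -∫ p, w p * (f p * ∂[v i] (∂[v i] f) p) ∂μ := by
    rw [integral_mul_mul_dirDeriv_of_dirDeriv_eq_zero hU hw (hwv i) hf.contDiff.contDiffOn
      (hf.dirDeriv (v i)), neg_neg]
    simp only [pow_two]
  rw [integral_mul_mul_partialLaplacian hU hw hf.contDiff.contDiffOn hf, ← Finset.sum_neg_distrib]
  exact Finset.sum_congr rfl fun i _ => green i

lemma integral_mul_sq_le_integral_mul_partialLaplacian_sq (hU : IsOpen U)
    (hw : ContDiffOn ℝ ∞ w U) (hw0 : ∀ p ∈ U, 0 ≤ w p) (hwv : ∀ i, ∀ p ∈ U, ∂[v i] w p = 0)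
    (hf : IsTestFunction U f) {ℓ : E →L[ℝ] ℝ} {i : ι} (hℓv : ℓ (v i) = 1) {R : ℝ}
    (hR : ∀ p ∈ tsupport f, |ℓ p| ≤ R) :
    ∫ p, w p * f p ^ 2 ∂μ ≤ 16 * R ^ 4 * ∫ p, w p * partialLaplacian v f p ^ 2 ∂μ := by
  have poincare := integral_mul_sq_le_integral_mul_dirDeriv_sq (μ := μ) hU hw hw0 (hwv i) hf hℓv hR
  have single_le_sum :
      ∫ p, w p * ∂[v i] f p ^ 2 ∂μ ≤ ∑ j, ∫ p, w p * ∂[v j] f p ^ 2 ∂μ :=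
    Finset.single_le_sum (f := fun j => ∫ p, w p * ∂[v j] f p ^ 2 ∂μ)
      (fun j _ => (hf.dirDeriv (v j)).integral_mul_sq_nonneg hw0) (Finset.mem_univ i)
  rw [sum_integral_mul_dirDeriv_sq hU hw hwv hf] at single_le_sum
  have young := hf.neg_integral_mul_mul_le (μ := μ) hU (κ := fun p => 4 * R ^ 2 * w p)
    (a := fun p => 1 / 2 * w p) (b := fun p => 8 * R ^ 4 * w p)
    (contDiffOn_const.mul hw) (contDiffOn_const.mul hw) (contDiffOn_const.mul hw)
    (fun p hp => mul_nonneg (by norm_num) (hw0 p hp))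
    (fun p hp => mul_nonneg (by positivity) (hw0 p hp)) (hf.partialLaplacian v)
    fun p _ => le_of_eq (by ring)
  simp only [mul_assoc, integral_const_mul] at young
  linarith [mul_le_mul_of_nonneg_left single_le_sum (show 0 ≤ 4 * R ^ 2 by positivity)]

lemma integral_dirDeriv_dirDeriv_mul_partialLaplacian_le (hU : IsOpen U)
    (hw : ContDiffOn ℝ ∞ w U) (hw0 : ∀ p ∈ U, 0 ≤ w p) (hwv : ∀ i, ∀ p ∈ U, ∂[v i] w p = 0)
    (hf : IsTestFunction U f) (u : E) :
    1 / 2 * ∫ p, ∂[u] (∂[u] w) p * (f p * partialLaplacian v f p) ∂μ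
      ≤ ∫ p, w p * (∂[u] (∂[u] f) p * partialLaplacian v f p) ∂μ := by
  have hw' := contDiffOn_dirDeriv hU hw u
  have hw''v (i : ι) : ∀ p ∈ U, ∂[v i] (∂[u] (∂[u] w)) p = 0 :=
    dirDeriv_dirDeriv_eq_zero hU hw' (dirDeriv_dirDeriv_eq_zero hU hw (hwv i) u) u
  have green := sum_integral_mul_dirDeriv_sq (μ := μ) hU (contDiffOn_dirDeriv hU hw' u) hw''v hf
  calc 1 / 2 * ∫ p, ∂[u] (∂[u] w) p * (f p * partialLaplacian v f p) ∂μ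
      = ∑ i, -(1 / 2 * ∫ p, ∂[u] (∂[u] w) p * ∂[v i] f p ^ 2 ∂μ) := by
        rw [Finset.sum_neg_distrib, ← Finset.mul_sum, green]
        ring
    _ ≤ ∑ i, ∫ p, w p * (∂[u] (∂[u] f) p * ∂[v i] (∂[v i] f) p) ∂μ := by
        gcongr with i
        rw [integral_mul_dirDeriv_dirDeriv_mul_dirDeriv_dirDeriv hU hw (hwv i) hf u]
        linarith [((hf.dirDeriv (v i)).dirDeriv u).integral_mul_sq_nonneg (μ := μ) hw0]
    _ = _ := (integral_mul_mul_partialLaplacian hU hw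
        ((hf.dirDeriv u).dirDeriv u).contDiff.contDiffOn hf).symm

-- Young's inequality compares `|w'' f Δf|` with `η w² (Δf)²` and `(4η)⁻¹ (w'' / w)² f²`.
lemma neg_integral_dirDeriv_dirDeriv_mul_mul_partialLaplacian_le (hU : IsOpen U)
    (hw : ContDiffOn ℝ ∞ w U) (hw0 : ∀ p ∈ U, 0 < w p) (hwv : ∀ i, ∀ p ∈ U, ∂[v i] w p = 0)
    {u : E} {δ B : ℝ} (hδ : 0 ≤ δ)
    (hw'' : ∀ p ∈ U, ∂[u] (∂[u] w) p ^ 2 ≤ w p ^ 2 * (δ * w p ^ 2 + B))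
    {η R : ℝ} (hη : 0 < η) (hδR : 4 * R ^ 4 * δ ≤ η ^ 2)
    {ℓ : E →L[ℝ] ℝ} {i : ι} (hℓv : ℓ (v i) = 1)
    (hf : IsTestFunction U f) (hR : ∀ p ∈ tsupport f, |ℓ p| ≤ R) :
    -∫ p, ∂[u] (∂[u] w) p * (f p * partialLaplacian v f p) ∂μ
      ≤ 2 * η * ∫ p, w p ^ 2 * partialLaplacian v f p ^ 2 ∂μ
        + B / (4 * η) * ∫ p, f p ^ 2 ∂μ := by
  have hw2v (i : ι) : ∀ p ∈ U, ∂[v i] (fun q => w q ^ 2) p = 0 := fun p hp =>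
    dirDeriv_sq_eq_zero (differentiableAt_of_contDiffOn hU hw hp) (hwv i p hp)
  have poincare := integral_mul_sq_le_integral_mul_partialLaplacian_sq (μ := μ) hU (hw.pow 2)
    (fun p _ => sq_nonneg (w p)) hw2v hf hℓv hR
  have young := hf.neg_integral_mul_mul_le (μ := μ) hU
    (a := fun p => δ / (4 * η) * w p ^ 2 + B / (4 * η)) (b := fun p => η * w p ^ 2)
    (contDiffOn_dirDeriv hU (contDiffOn_dirDeriv hU hw u) u)
    ((contDiffOn_const.mul (hw.pow 2)).add contDiffOn_const) (contDiffOn_const.mul (hw.pow 2))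
    (fun p hp => by
      have := (mul_nonneg_iff_of_pos_left (pow_pos (hw0 p hp) 2)).1
        ((sq_nonneg _).trans (hw'' p hp))
      rw [div_mul_eq_mul_div, ← add_div]
      positivity)
    (fun p _ => by positivity) (hf.partialLaplacian v)
    fun p hp => (hw'' p (hf.tsupport_subset hp)).trans_eq (by field_simp)
  have absorb : δ / (4 * η) * ∫ p, w p ^ 2 * f p ^ 2 ∂μ
      ≤ η * ∫ p, w p ^ 2 * partialLaplacian v f p ^ 2 ∂μ := by
    have := (hf.partialLaplacian v).integral_mul_sq_nonneg (μ := μ)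
      (fun p _ => sq_nonneg (w p))
    calc δ / (4 * η) * ∫ p, w p ^ 2 * f p ^ 2 ∂μ
        ≤ δ / (4 * η) * (16 * R ^ 4 * ∫ p, w p ^ 2 * partialLaplacian v f p ^ 2 ∂μ) := by
          gcongr
      _ = (4 * R ^ 4 * δ / η) * ∫ p, w p ^ 2 * partialLaplacian v f p ^ 2 ∂μ := by
          field_simp
          ring
      _ ≤ η * ∫ p, w p ^ 2 * partialLaplacian v f p ^ 2 ∂μ := by
          gcongr
          rwa [div_le_iff₀ hη, ← pow_two]
  simp only [add_mul, mul_assoc] at young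
  rw [integral_add ((hf.sq.smooth_mul hU (hw.pow 2)).const_mul _).integrable
    (hf.sq.const_mul _).integrable] at young
  simp only [integral_const_mul] at young
  linarith

theorem integral_sq_dirDeriv_add_integral_sq_partialLaplacian_le (hU : IsOpen U)
    (hw : ContDiffOn ℝ ∞ w U) (hw0 : ∀ p ∈ U, 0 < w p) (hwv : ∀ i, ∀ p ∈ U, ∂[v i] w p = 0)
    {u : E} {δ B : ℝ} (hδ : 0 ≤ δ)
    (hw'' : ∀ p ∈ U, ∂[u] (∂[u] w) p ^ 2 ≤ w p ^ 2 * (δ * w p ^ 2 + B))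
    {η R : ℝ} (hη : 0 < η) (hδR : 4 * R ^ 4 * δ ≤ η ^ 2)
    {ℓ : E →L[ℝ] ℝ} {i : ι} (hℓv : ℓ (v i) = 1)
    (hf : IsTestFunction U f) (hR : ∀ p ∈ tsupport f, |ℓ p| ≤ R) :
    ∫ p, ∂[u] (∂[u] f) p ^ 2 ∂μ + (1 - 2 * η) * ∫ p, w p ^ 2 * partialLaplacian v f p ^ 2 ∂μ
        - B / (4 * η) * ∫ p, f p ^ 2 ∂μ
      ≤ ∫ p, (-∂[u] (∂[u] f) p - w p * partialLaplacian v f p) ^ 2 ∂μ := by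
  have expand := ((hf.dirDeriv u).dirDeriv u).integral_sq_neg_sub_mul (μ := μ) hU hw
    (hf.partialLaplacian v)
  have cross := integral_dirDeriv_dirDeriv_mul_partialLaplacian_le (μ := μ) hU hw
    (fun p hp => (hw0 p hp).le) hwv hf u
  have absorb := neg_integral_dirDeriv_dirDeriv_mul_mul_partialLaplacian_le (μ := μ) hU hw hw0 hwv
    hδ hw'' hη hδR hℓv hf hR
  linarith

end PartialLaplacian

section RadialWeight

lemma exists_rpow_neg_le_mul_rpow_neg_add {s t δ : ℝ} (hs : 0 ≤ s) (hst : s < t) (hδ : 0 < δ) :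
    ∃ B : ℝ, 0 < B ∧ ∀ r : ℝ, 0 < r → r ^ (-s) ≤ δ * r ^ (-t) + B := by
  have hts : 0 < t - s := sub_pos.2 hst
  set r₀ := δ ^ (t - s)⁻¹ with hr₀
  have hr₀_pos : 0 < r₀ := Real.rpow_pos_of_pos hδ _
  have hB : 0 < r₀ ^ (-s) := Real.rpow_pos_of_pos hr₀_pos _
  refine ⟨r₀ ^ (-s), hB, fun r hr => ?_⟩
  rcases le_total r r₀ with hle | hle
  · calc r ^ (-s) = r ^ (t - s) * r ^ (-t) := by rw [← Real.rpow_add hr]; ring_nf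
      _ ≤ r₀ ^ (t - s) * r ^ (-t) := by gcongr
      _ = δ * r ^ (-t) := by rw [hr₀, Real.rpow_inv_rpow hδ.le hts.ne']
      _ ≤ δ * r ^ (-t) + r₀ ^ (-s) := le_add_of_nonneg_right hB.le
  · calc r ^ (-s) ≤ r₀ ^ (-s) := Real.rpow_le_rpow_of_nonpos hr₀_pos hle (neg_nonpos.2 hs)
      _ ≤ δ * r ^ (-t) + r₀ ^ (-s) := le_add_of_nonneg_left (by positivity)

lemma rpow_neg_sq {r : ℝ} (hr : 0 ≤ r) (s : ℝ) : (r ^ (-s)) ^ 2 = r ^ (-(2 * s)) := by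
  rw [← Real.rpow_mul_natCast hr]
  push_cast
  ring_nf

lemma isOpen_fst_pos {F : Type*} [TopologicalSpace F] : IsOpen {p : ℝ × F | 0 < p.1} :=
  isOpen_lt continuous_const continuous_fst

variable {F : Type*} [NormedAddCommGroup F] [NormedSpace ℝ F]

lemma contDiffOn_fst_rpow (s : ℝ) :
    ContDiffOn ℝ ∞ (fun p : ℝ × F => p.1 ^ s) {p | 0 < p.1} :=
  contDiffOn_fst.rpow_const_of_ne fun _ (hp : 0 < _) => hp.ne'

lemma dirDeriv_fst_rpow (s : ℝ) (v : ℝ × F) {p : ℝ × F} (hp : p.1 ≠ 0) :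
    ∂[v] (fun q => q.1 ^ s) p = s * v.1 * p.1 ^ (s - 1) := by
  have := (hasFDerivAt_fst (𝕜 := ℝ) (p := p)).rpow_const (p := s) (.inl hp)
  simp only [dirDeriv, this.fderiv, smul_apply, ContinuousLinearMap.coe_fst', smul_eq_mul]
  ring

lemma dirDeriv_dirDeriv_fst_rpow (s : ℝ) (v : ℝ × F) {p : ℝ × F} (hp : 0 < p.1) :
    ∂[v] (∂[v] (fun q => q.1 ^ s)) p = s * (s - 1) * v.1 ^ 2 * p.1 ^ (s - 2) := by
  have dirDeriv_eqOn : EqOn (∂[v] (fun q : ℝ × F => q.1 ^ s))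
      (fun q => s * v.1 * q.1 ^ (s - 1)) {q | 0 < q.1} :=
    fun _ (hq : 0 < _) => dirDeriv_fst_rpow s v hq.ne'
  have hdiff := differentiableAt_of_contDiffOn isOpen_fst_pos (contDiffOn_fst_rpow (s - 1)) hp
  rw [dirDeriv_eq_of_eqOn isOpen_fst_pos dirDeriv_eqOn v hp,
    dirDeriv_mul v (differentiableAt_const _) hdiff, dirDeriv_fst_rpow (s - 1) v hp.ne',
    show s - 1 - 1 = s - 2 by ring]
  simp only [dirDeriv, fderiv_fun_const, Pi.zero_apply, zero_apply]
  ring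

lemma exists_sq_dirDeriv_dirDeriv_fst_rpow_le {α : ℝ} (hα : 2 < α) (v : ℝ × F) {δ : ℝ}
    (hδ : 0 < δ) :
    ∃ B : ℝ, 0 < B ∧ ∀ p : ℝ × F, 0 < p.1 →
      ∂[v] (∂[v] (fun q => q.1 ^ (-α))) p ^ 2
        ≤ (p.1 ^ (-α)) ^ 2 * (δ * (p.1 ^ (-α)) ^ 2 + B) := by
  set A := α * (α + 1) * v.1 ^ 2
  obtain ⟨δ', hδ', hAδ'⟩ := exists_pos_mul_lt hδ (A ^ 2)
  obtain ⟨B, hB, absorb⟩ := exists_rpow_neg_le_mul_rpow_neg_add (s := 4) (t := 2 * α)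
    (by norm_num) (by linarith) hδ'
  refine ⟨(A ^ 2 + 1) * B, by positivity, fun p hp => ?_⟩
  have hsplit : p.1 ^ (-α - 2) = p.1 ^ (-α) * p.1 ^ (-2 : ℝ) := by
    rw [← Real.rpow_add hp, sub_eq_add_neg]
  calc ∂[v] (∂[v] (fun q => q.1 ^ (-α))) p ^ 2
      = (p.1 ^ (-α)) ^ 2 * (A ^ 2 * p.1 ^ (-4 : ℝ)) := by
        rw [dirDeriv_dirDeriv_fst_rpow _ v hp, hsplit, show (4 : ℝ) = 2 * 2 by norm_num,
          ← rpow_neg_sq hp.le 2]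
        ring
    _ ≤ (p.1 ^ (-α)) ^ 2 * (A ^ 2 * (δ' * p.1 ^ (-(2 * α)) + B)) := by
        gcongr
        exact absorb p.1 hp
    _ = (p.1 ^ (-α)) ^ 2 * (A ^ 2 * δ' * (p.1 ^ (-α)) ^ 2 + A ^ 2 * B) := by
        rw [← rpow_neg_sq hp.le α]
        ring
    _ ≤ (p.1 ^ (-α)) ^ 2 * (δ * (p.1 ^ (-α)) ^ 2 + (A ^ 2 + 1) * B) := by
        gcongr
        linarith

lemma IsTestFunction.rpow_neg_two_mul_mul {f : ℝ × F → ℝ} (hf : IsTestFunction {p | 0 < p.1} f)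
    (α : ℝ) (p : ℝ × F) : p.1 ^ (-(2 * α)) * f p = (p.1 ^ (-α)) ^ 2 * f p := by
  by_cases hp : 0 < p.1
  · rw [rpow_neg_sq hp.le]
  · simp [hf.eq_zero hp]

end RadialWeight

section Cylinder

variable {k : ℕ} {φ : ℝ × (Fin k → ℝ) → ℝ}

/-- The coordinate vector of `θ_i` in `ℝ × ℝ^k`. -/
def angularVec (i : Fin k) : ℝ × (Fin k → ℝ) := (0, Pi.single i 1)

lemma radialD2_eq_dirDeriv (hφ : ContDiff ℝ ∞ φ) : radialD2 φ = ∂[(1, 0)] (∂[(1, 0)] φ) :=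
  funext fun p => iteratedDeriv_two_comp_eq_dirDeriv
    (fun s => (hasDerivAt_id s).prodMk (hasDerivAt_const s p.2)) hφ p.1

lemma angularLaplacian_eq_partialLaplacian (hφ : ContDiff ℝ ∞ φ) :
    angularLaplacian φ = partialLaplacian angularVec φ :=
  funext fun p => Finset.sum_congr rfl fun i _ => by
    rw [iteratedDeriv_two_comp_eq_dirDeriv
      (fun u => (hasDerivAt_const u p.1).prodMk (hasDerivAt_update p.2 i u)) hφ,
      Function.update_eq_self]
    rfl

theorem exists_integral_sq_modelOp_ge (i : Fin k) (R : ℝ) {α c : ℝ} (hα : 2 < α) (hc : c < 1) :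
    ∃ B : ℝ, 0 < B ∧ ∀ φ : ℝ × (Fin k → ℝ) → ℝ, IsTestFunction {p | 0 < p.1} φ →
      (∀ p ∈ tsupport φ, |p.2 i| ≤ R) →
      (∫ p, radialD2 φ p ^ 2) + c * (∫ p, p.1 ^ (-(2 * α)) * angularLaplacian φ p ^ 2)
          - B * (∫ p, φ p ^ 2)
        ≤ ∫ p, modelOp α φ p ^ 2 := by
  obtain ⟨η, hη, rfl⟩ : ∃ η, 0 < η ∧ c = 1 - 2 * η := ⟨(1 - c) / 2, by linarith, by ring⟩
  obtain ⟨δ, hδ, hδR⟩ := exists_pos_mul_lt (sq_pos_of_pos hη) (4 * R ^ 4)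
  obtain ⟨B, hB, hw''⟩ :=
    exists_sq_dirDeriv_dirDeriv_fst_rpow_le (F := Fin k → ℝ) hα (1, 0) hδ
  refine ⟨B / (4 * η), by positivity, fun φ hφ hR => ?_⟩
  have hw_angular (j : Fin k) : ∀ p ∈ {p : ℝ × (Fin k → ℝ) | 0 < p.1},
      ∂[angularVec j] (fun q => q.1 ^ (-α)) p = 0 := fun p (hp : 0 < p.1) => by
    simp [dirDeriv_fst_rpow (-α) _ hp.ne', angularVec]
  let ℓ : ℝ × (Fin k → ℝ) →L[ℝ] ℝ := (ContinuousLinearMap.proj i).comp (.snd ℝ ℝ (Fin k → ℝ))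
  have hΔ := (hφ.partialLaplacian angularVec).sq
  simp only [modelOp, radialD2_eq_dirDeriv hφ.contDiff,
    angularLaplacian_eq_partialLaplacian hφ.contDiff, hΔ.rpow_neg_two_mul_mul]
  exact integral_sq_dirDeriv_add_integral_sq_partialLaplacian_le
    (μ := (volume : Measure ℝ).prod (volume : Measure (Fin k → ℝ)))
    isOpen_fst_pos (contDiffOn_fst_rpow (-α)) (fun p hp => Real.rpow_pos_of_pos hp _) hw_angular
    hδ.le hw'' hη hδR.le (ℓ := ℓ) (i := i) (by simp [ℓ, angularVec]) hφ hR

end Cylinder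

end BasicEstimate

open BasicEstimate in
theorem basic_estimate_general {k : ℕ} (i : Fin k) (R : ℝ) {α c : ℝ} (hα : 2 < α) (hc : c < 1) :
    ∃ B : ℝ, 0 < B ∧ ∀ U ⊆ Ioi (0 : ℝ) ×ˢ {θ : Fin k → ℝ | |θ i| ≤ R},
      ∀ φ : ℝ × (Fin k → ℝ) → ℝ, ContDiff ℝ ∞ φ → HasCompactSupport φ → tsupport φ ⊆ U →
        (∫ p in U, radialD2 φ p ^ 2)
          + c * (∫ p in U, p.1 ^ (-(2 * α)) * angularLaplacian φ p ^ 2)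
          - B * (∫ p in U, φ p ^ 2)
        ≤ ∫ p in U, modelOp α φ p ^ 2 := by
  obtain ⟨B, hB, estimate⟩ := exists_integral_sq_modelOp_ge i R hα hc
  refine ⟨B, hB, fun U hU φ hφ hφc hφU => ?_⟩
  have hφ_test : IsTestFunction U φ := ⟨hφ, hφc, hφU⟩
  have hφ_zero {p} (hp : p ∉ U) : φ p = 0 := hφ_test.eq_zero hp
  have radial_zero {p} (hp : p ∉ U) : radialD2 φ p = 0 := by
    rw [radialD2_eq_dirDeriv hφ, ((hφ_test.dirDeriv _).dirDeriv _).eq_zero hp]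
  have angular_zero {p} (hp : p ∉ U) : angularLaplacian φ p = 0 := by
    rw [angularLaplacian_eq_partialLaplacian hφ, (hφ_test.partialLaplacian _).eq_zero hp]
  iterate 4 rw [setIntegral_eq_integral_of_forall_compl_eq_zero fun p hp => by
    simp [modelOp, hφ_zero hp, radial_zero hp, angular_zero hp]]
  exact estimate φ ⟨hφ, hφc, fun p hp => (hU (hφU hp)).1⟩ fun p hp => (hU (hφU hp)).2

/-- **Basic Estimate for the model operator `H_α = −∂_r² − r^{−α} Δ_θ`, `α > 2`.**
There are constants `c, B > 0` such that for every smooth `φ` compactly supported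
in `(0,ε) × Ω`:
`∫ (H_α φ)² ≥ ∫ (∂_r² φ)² + c ∫ r^{−2α} (Δ_θ φ)² − B ∫ φ²`. -/
theorem basic_estimate
    (k : ℕ) (hk : 1 ≤ k) (Ω : Set (Fin k → ℝ)) (hΩopen : IsOpen Ω)
    (hΩbdd : Bornology.IsBounded Ω)
    (ε α : ℝ) (hε : 0 < ε) (hα : 2 < α) :
    ∃ c : ℝ, 0 < c ∧ ∃ B : ℝ, 0 < B ∧
      ∀ φ : ℝ × (Fin k → ℝ) → ℝ, ContDiff ℝ (⊤ : ℕ∞) φ → HasCompactSupport φ →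
        tsupport φ ⊆ Set.Ioo 0 ε ×ˢ Ω →
        (∫ p in Set.Ioo (0 : ℝ) ε ×ˢ Ω, (radialD2 φ p) ^ 2)
          + c * (∫ p in Set.Ioo (0 : ℝ) ε ×ˢ Ω, p.1 ^ (-(2 * α)) * (angularLaplacian φ p) ^ 2)
          - B * (∫ p in Set.Ioo (0 : ℝ) ε ×ˢ Ω, (φ p) ^ 2)
        ≤ ∫ p in Set.Ioo (0 : ℝ) ε ×ˢ Ω, (modelOp α φ p) ^ 2 := by
  obtain ⟨R, hR⟩ := hΩbdd.exists_norm_le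
  obtain ⟨B, hB, estimate⟩ := basic_estimate_general ⟨0, hk⟩ R hα one_half_lt_one
  exact ⟨1 / 2, one_half_pos, B, hB, estimate _ <| Set.prod_mono Set.Ioo_subset_Ioi_self
    fun θ hθ => (norm_le_pi_norm θ _).trans (hR θ hθ)⟩
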